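/- Fix an integer r ≥ 1. There exists a constant C > 0 such that for every real number x ≥ 1, the family of terms 1/(φ([n_1,…,n_r])·n_1·n_2⋯n_r), indexed by multi-indices N = (n_1,…,n_r) of positive integers with x < n_1 ≤ 2x, is summable and its sum is at most C/x. -/

import Mathlib

open scoped BigOperators

/-- The general term `1/(φ([n_1,…,n_r])·n_1⋯n_r)` associated to a multi-index
`N = (n_1,…,n_r)` of positive integers. -/
noncomputable def eulerTerm (r : ℕ) (N : Fin r → ℕ+) : ℝ :=
  1 / ((Nat.totient (Finset.univ.lcm fun i => (N i : ℕ)) : ℝ) * ∏ i, ((N i : ℕ) : ℝ))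

/-!
Write `g(n) = σ(n)/n = ∑_{d ∣ n} 1/d`. Comparing Euler factors, `1/φ(n) ≤ g(n)² / n`, so it
suffices to bound sums with `g(L)² / L`, `L = [n_1, …, n_r]`, in place of `1/φ(L)`. Since `g` is
submultiplicative and `1/[m, n] = gcd(m, n)/(m n)`, the bound `gcd(m, n) ≤ ∑_{d ∣ m, d ∣ n} d`
gives `∑_n g([m, n])^a / ([m, n] n) ≪ g(m)^(2a+1) / m`. Summing out all variables but one
therefore leaves `g(n)^b / n²` for some exponent `b`, and `∑_{n > x} g(n)^b / n² ≪ 1/x` by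
induction on `b`: expanding one factor `g(n)` and writing `n = d k` reduces to the tails at `x/d`.
Thus already the whole tail `n_1 > x` contributes `O(1/x)`.
-/

open scoped ENNReal ArithmeticFunction.sigma

lemma tsum_subtype_eq_tsum_ite {α : Type*} (p : α → Prop) [DecidablePred p] (f : α → ℝ≥0∞) :
    ∑' a : {a // p a}, f a = ∑' a, if p a then f a else 0 := by
  classical
  refine (tsum_subtype {a | p a} f).trans (tsum_congr fun a => ?_)
  simp only [Set.indicator_apply, Set.mem_ofPred_eq]

lemma summable_and_tsum_le_of_tsum_ofReal_le {α : Type*} {f : α → ℝ} (hf : ∀ a, 0 ≤ f a)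
    {c : ℝ≥0∞} (hc : c ≠ ∞) (h : ∑' a, ENNReal.ofReal (f a) ≤ c) :
    Summable f ∧ ∑' a, f a ≤ c.toReal := by
  have hsum : Summable f := by
    simpa only [ENNReal.toReal_ofReal (hf _)] using
      ENNReal.summable_toReal (ne_top_of_le_ne_top hc h)
  refine ⟨hsum, (ENNReal.ofReal_le_iff_le_toReal hc).mp ?_⟩
  rwa [ENNReal.ofReal_tsum_of_nonneg hf hsum]

lemma summable_and_tsum_le_of_imp {α : Type*} {f : α → ℝ} (hf : ∀ a, 0 ≤ f a) {p q : α → Prop}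
    (hpq : ∀ a, p a → q a) {c : ℝ}
    (h : Summable (fun a : {a // q a} => f a) ∧ ∑' a : {a // q a}, f a ≤ c) :
    Summable (fun a : {a // p a} => f a) ∧ ∑' a : {a // p a}, f a ≤ c := by
  obtain ⟨hsum, hle⟩ := h
  have hinj : Function.Injective (Subtype.map id hpq) :=
    Subtype.map_injective hpq Function.injective_id
  refine ⟨hsum.comp_injective hinj, le_trans ?_ hle⟩
  exact tsum_comp_le_tsum_of_inj hsum (fun a => hf a) hinj

lemma ennreal_inv_natCast_mul (a b : ℕ) :
    ((a * b : ℕ) : ℝ≥0∞)⁻¹ = (a : ℝ≥0∞)⁻¹ * (b : ℝ≥0∞)⁻¹ := by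
  rw [Nat.cast_mul, ENNReal.mul_inv (.inr (ENNReal.natCast_ne_top b))
    (.inl (ENNReal.natCast_ne_top a))]

lemma ennreal_natCast_mul_inv_cancel {a : ℕ} (ha : a ≠ 0) :
    (a : ℝ≥0∞) * (a : ℝ≥0∞)⁻¹ = 1 :=
  ENNReal.mul_inv_cancel (Nat.cast_ne_zero.mpr ha) (ENNReal.natCast_ne_top a)

lemma tsum_pnat_ite_dvd (d : ℕ+) (F : ℕ → ℝ≥0∞) :
    ∑' n : ℕ+, (if (d : ℕ) ∣ n then F n else 0) = ∑' k : ℕ+, F (d * k) := by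
  rw [← (mul_right_injective d).tsum_eq]
  · simp
  · intro n hn
    have hdvd : (d : ℕ) ∣ n := by
      by_contra h
      simp [h] at hn
    obtain ⟨k, rfl⟩ := PNat.dvd_iff.mpr hdvd
    exact ⟨k, rfl⟩

lemma tsum_pnat_sum_divisors (F : ℕ → ℕ → ℝ≥0∞) :
    ∑' n : ℕ+, ∑ d ∈ (n : ℕ).divisors, F d n = ∑' d : ℕ+, ∑' k : ℕ+, F d (d * k) := by
  rw [← ENNReal.tsum_prod (f := fun d k : ℕ+ => F d (d * k)),
    ← sigmaAntidiagonalEquivProd.tsum_eq, ENNReal.tsum_sigma']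
  refine tsum_congr fun n => ?_
  rw [← Nat.sum_divisorsAntidiagonal fun d _ => F d n, ← Finset.tsum_subtype]
  refine tsum_congr fun p => ?_
  change F p.1.1 n = F p.1.1 (p.1.1 * p.1.2)
  rw [(Nat.mem_divisorsAntidiagonal.mp p.2).1]

lemma tsum_pnat_gcd_mul_le {m : ℕ} (hm : m ≠ 0) (F : ℕ → ℝ≥0∞) :
    ∑' n : ℕ+, (m.gcd n : ℝ≥0∞) * F n ≤
      ∑ d ∈ m.divisors, (d : ℝ≥0∞) * ∑' k : ℕ+, F (d * k) := by
  calc ∑' n : ℕ+, (m.gcd n : ℝ≥0∞) * F n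
      ≤ ∑' n : ℕ+, ∑ d ∈ m.divisors, if d ∣ n then (d : ℝ≥0∞) * F n else 0 := by
        refine ENNReal.tsum_le_tsum fun n => ?_
        have hgcd : m.gcd n ∈ m.divisors := Nat.mem_divisors.mpr ⟨Nat.gcd_dvd_left m n, hm⟩
        simpa only [if_pos (Nat.gcd_dvd_right m n)] using Finset.single_le_sum
          (f := fun d : ℕ => if d ∣ n then (d : ℝ≥0∞) * F n else 0) (fun _ _ => zero_le) hgcd
    _ = ∑ d ∈ m.divisors, ∑' n : ℕ+, if d ∣ n then (d : ℝ≥0∞) * F n else 0 :=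
        Summable.tsum_finsetSum fun _ _ => ENNReal.summable
    _ = ∑ d ∈ m.divisors, (d : ℝ≥0∞) * ∑' k : ℕ+, F (d * k) := by
        refine Finset.sum_congr rfl fun d hd => ?_
        rw [← ENNReal.tsum_mul_left]
        exact tsum_pnat_ite_dvd ⟨d, Nat.pos_of_mem_divisors hd⟩ fun n => d * F n

/-- The abundancy index `σ(n) / n`, written as the sum of the reciprocals of the divisors of `n`
and valued in `ℝ≥0∞` so that no summability has to be tracked. -/
noncomputable def abundancyIndex (n : ℕ) : ℝ≥0∞ := ∑ d ∈ n.divisors, (d : ℝ≥0∞)⁻¹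

lemma abundancyIndex_mul_le (m n : ℕ) :
    abundancyIndex (m * n) ≤ abundancyIndex m * abundancyIndex n := by
  classical
  unfold abundancyIndex
  rw [Nat.divisors_mul, Finset.sum_mul_sum, ← Finset.sum_product']
  refine (Finset.sum_image_le_of_nonneg fun _ _ => zero_le).trans_eq ?_
  exact Finset.sum_congr rfl fun p _ => ennreal_inv_natCast_mul p.1 p.2

lemma abundancyIndex_le_of_dvd {m n : ℕ} (hn : n ≠ 0) (h : m ∣ n) :
    abundancyIndex m ≤ abundancyIndex n :=
  Finset.sum_le_sum_of_subset (Nat.divisors_subset_of_dvd hn h)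

lemma abundancyIndex_lcm_le {m n : ℕ} (hm : m ≠ 0) (hn : n ≠ 0) :
    abundancyIndex (m.lcm n) ≤ abundancyIndex m * abundancyIndex n :=
  (abundancyIndex_le_of_dvd (mul_ne_zero hm hn) (Nat.lcm_dvd_mul m n)).trans
    (abundancyIndex_mul_le m n)

lemma natCast_mul_abundancyIndex (n : ℕ) : (n : ℝ≥0∞) * abundancyIndex n = σ 1 n := by
  rw [ArithmeticFunction.sigma_one_apply, ← Nat.sum_div_divisors n fun d => d, abundancyIndex,
    Finset.mul_sum, Nat.cast_sum]
  refine Finset.sum_congr rfl fun d hd => ?_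
  have hd0 : d ≠ 0 := (Nat.pos_of_mem_divisors hd).ne'
  obtain ⟨k, rfl⟩ := Nat.dvd_of_mem_divisors hd
  rw [Nat.mul_div_cancel_left _ (Nat.pos_of_ne_zero hd0), Nat.cast_mul, mul_right_comm,
    ennreal_natCast_mul_inv_cancel hd0, one_mul]

lemma prime_pow_cube_le_sigma_sq_mul_totient {p k : ℕ} (hp : p.Prime) (hk : 0 < k) :
    (p ^ k) ^ 3 ≤ σ 1 (p ^ k) ^ 2 * (p ^ k).totient := by
  obtain ⟨j, rfl⟩ := Nat.exists_eq_add_of_le' hk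
  obtain ⟨q, rfl⟩ := Nat.exists_eq_add_of_le' hp.two_le
  have hσ : (q + 2) ^ j * (q + 3) ≤ σ 1 ((q + 2) ^ (j + 1)) := by
    rw [ArithmeticFunction.sigma_one_apply_prime_pow hp, Finset.sum_range_succ,
      Finset.sum_range_succ]
    calc (q + 2) ^ j * (q + 3) = (q + 2) ^ j + (q + 2) ^ (j + 1) := by ring
      _ ≤ _ := by gcongr; exact Nat.le_add_left _ _
  have hφ : ((q + 2) ^ (j + 1)).totient = (q + 2) ^ j * (q + 1) :=
    Nat.totient_prime_pow_succ hp j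
  calc ((q + 2) ^ (j + 1)) ^ 3 = ((q + 2) ^ j) ^ 3 * (q + 2) ^ 3 := by ring
    _ ≤ ((q + 2) ^ j) ^ 3 * ((q + 3) ^ 2 * (q + 1)) := by gcongr; nlinarith
    _ = ((q + 2) ^ j * (q + 3)) ^ 2 * ((q + 2) ^ j * (q + 1)) := by ring
    _ ≤ σ 1 ((q + 2) ^ (j + 1)) ^ 2 * ((q + 2) ^ (j + 1)).totient := by rw [hφ]; gcongr

lemma cube_le_sigma_sq_mul_totient (n : ℕ) : n ^ 3 ≤ σ 1 n ^ 2 * n.totient := by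
  induction n using Nat.recOnPosPrimePosCoprime with
  | prime_pow p k hp hk => exact prime_pow_cube_le_sigma_sq_mul_totient hp hk
  | zero => simp
  | one => simp
  | coprime a b _ _ hab ha hb =>
    rw [ArithmeticFunction.isMultiplicative_sigma.map_mul_of_coprime hab, Nat.totient_mul hab]
    calc (a * b) ^ 3 = a ^ 3 * b ^ 3 := mul_pow a b 3
      _ ≤ (σ 1 a ^ 2 * a.totient) * (σ 1 b ^ 2 * b.totient) := Nat.mul_le_mul ha hb
      _ = (σ 1 a * σ 1 b) ^ 2 * (a.totient * b.totient) := by ring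

lemma inv_totient_le_abundancyIndex_sq_mul_inv {n : ℕ} (hn : n ≠ 0) :
    (n.totient : ℝ≥0∞)⁻¹ ≤ abundancyIndex n ^ 2 * (n : ℝ≥0∞)⁻¹ := by
  have hcube : (n : ℝ≥0∞) ^ 3 ≤ (n * abundancyIndex n) ^ 2 * n.totient := by
    rw [natCast_mul_abundancyIndex]
    exact_mod_cast cube_le_sigma_sq_mul_totient n
  have hn_inv := ennreal_natCast_mul_inv_cancel hn
  have hφ_inv := ennreal_natCast_mul_inv_cancel (Nat.totient_pos.mpr (Nat.pos_of_ne_zero hn)).ne'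
  set u := (n : ℝ≥0∞)⁻¹
  set v := (n.totient : ℝ≥0∞)⁻¹
  calc v = (n * u) ^ 3 * v := by rw [hn_inv, one_pow, one_mul]
    _ = (n : ℝ≥0∞) ^ 3 * (u ^ 3 * v) := by ring
    _ ≤ ((n * abundancyIndex n) ^ 2 * n.totient) * (u ^ 3 * v) := by gcongr
    _ = (n * u) ^ 2 * (n.totient * v) * (abundancyIndex n ^ 2 * u) := by ring
    _ = abundancyIndex n ^ 2 * u := by rw [hn_inv, hφ_inv, one_pow, one_mul, one_mul]

/-- The tails `∑_{n > x} f n` over positive integers are `O(1/x)`. Multiplying by `x` instead of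
dividing makes the bound meaningful at `x = 0` and `x = ∞` too; `f 0` is ignored. -/
def HasInvTail (f : ℕ → ℝ≥0∞) : Prop :=
  ∃ C ≠ ∞, ∀ x : ℝ≥0∞, x * ∑' n : ℕ+, (if x < n then f n else 0) ≤ C

namespace HasInvTail

lemma tsum_ne_top {f : ℕ → ℝ≥0∞} (hf : HasInvTail f) : ∑' n : ℕ+, f n ≠ ∞ := by
  obtain ⟨C, hC, htail⟩ := hf
  have hlt (n : ℕ+) : (2⁻¹ : ℝ≥0∞) < n :=
    ENNReal.one_half_lt_one.trans_le (Nat.one_le_cast.mpr n.pos)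
  have hhalf : 2⁻¹ * ∑' n : ℕ+, f n ≤ C := by simpa only [hlt, if_true] using htail 2⁻¹
  intro htop
  rw [htop, ENNReal.mul_top (by simp)] at hhalf
  exact hC (top_le_iff.mp hhalf)

lemma mul_abundancyIndex {f : ℕ → ℝ≥0∞} (hmul : ∀ d k, f (d * k) ≤ f d * f k)
    (hf : HasInvTail f) : HasInvTail fun n => f n * abundancyIndex n := by
  have hsum := hf.tsum_ne_top
  obtain ⟨C, hC, htail⟩ := hf
  refine ⟨(∑' d : ℕ+, f d) * C, ENNReal.mul_ne_top hsum hC, fun x => ?_⟩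
  have hlt (d k : ℕ+) : x < (d * k : ℕ) ↔ x / d < k := by
    rw [ENNReal.div_lt_iff (by simp) (by simp), mul_comm, Nat.cast_mul]
  calc x * ∑' n : ℕ+, (if x < n then f n * abundancyIndex n else 0)
      = x * ∑' n : ℕ+, ∑ d ∈ (n : ℕ).divisors, (if x < n then f n else 0) * (d : ℝ≥0∞)⁻¹ := by
        congr 1
        refine tsum_congr fun n => ?_
        rw [← Finset.mul_sum, ← abundancyIndex, ite_zero_mul]
    _ = x * ∑' d : ℕ+, ∑' k : ℕ+, (if x / d < k then f (d * k) else 0) * (d : ℝ≥0∞)⁻¹ := by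
        rw [tsum_pnat_sum_divisors fun d n => (if x < n then f n else 0) * (d : ℝ≥0∞)⁻¹]
        simp only [hlt]
    _ ≤ x * ∑' d : ℕ+, ∑' k : ℕ+, (f d * if x / d < k then f k else 0) * (d : ℝ≥0∞)⁻¹ := by
        gcongr with d k
        split_ifs
        · exact hmul d k
        · exact zero_le
    _ = ∑' d : ℕ+, f d * (x / d * ∑' k : ℕ+, if x / d < k then f k else 0) := by
        rw [← ENNReal.tsum_mul_left]
        refine tsum_congr fun d => ?_
        rw [ENNReal.tsum_mul_right, ENNReal.tsum_mul_left, div_eq_mul_inv]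
        ring
    _ ≤ ∑' d : ℕ+, f d * C := by gcongr with d; exact htail (x / d)
    _ = (∑' d : ℕ+, f d) * C := ENNReal.tsum_mul_right

end HasInvTail

lemma sum_Ioo_ennreal_inv_sq_le (k n : ℕ) :
    ∑ i ∈ Finset.Ioo k n, (i : ℝ≥0∞)⁻¹ ^ 2 ≤ 2 / (k + 1) := by
  have hreal := ENNReal.ofReal_le_ofReal (sum_Ioo_inv_sq_le (α := ℝ) k n)
  rw [ENNReal.ofReal_sum_of_nonneg fun _ _ => by positivity,
    ENNReal.ofReal_div_of_pos (by positivity)] at hreal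
  convert! hreal using 1
  · refine Finset.sum_congr rfl fun i hi => ?_
    have hi0 : (0 : ℝ) < i := by exact_mod_cast Nat.zero_lt_of_lt (Finset.mem_Ioo.mp hi).1
    rw [← inv_pow, ENNReal.ofReal_pow (by positivity), ENNReal.ofReal_inv_of_pos hi0,
      ENNReal.ofReal_natCast]
  · rw [ENNReal.ofReal_ofNat, ← Nat.cast_succ, ← Nat.cast_succ, ENNReal.ofReal_natCast]

lemma hasInvTail_inv_sq : HasInvTail fun n => (n : ℝ≥0∞)⁻¹ ^ 2 := by
  refine ⟨2, ENNReal.ofNat_ne_top, fun x => ?_⟩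
  induction x with
  | top => simp
  | coe x =>
    have hfilter (n : ℕ) : (Finset.range n).filter (fun i : ℕ => (x : ℝ≥0∞) < i) =
        Finset.Ioo ⌊x⌋₊ n := by
      ext i
      rw [Finset.mem_filter, Finset.mem_range, Finset.mem_Ioo, Nat.floor_lt zero_le, and_comm]
      norm_cast
    have htail : ∑' n : ℕ+, (if (x : ℝ≥0∞) < n then (n : ℝ≥0∞)⁻¹ ^ 2 else 0) ≤
        2 / (⌊x⌋₊ + 1) := by
      refine (ENNReal.tsum_comp_le_tsum_of_injective PNat.coe_injective
        fun n : ℕ => if (x : ℝ≥0∞) < n then (n : ℝ≥0∞)⁻¹ ^ 2 else 0).trans ?_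
      refine ENNReal.tsum_le_of_sum_range_le fun n => ?_
      rw [← Finset.sum_filter, hfilter]
      exact sum_Ioo_ennreal_inv_sq_le _ n
    have hx : (x : ℝ≥0∞) ≤ ⌊x⌋₊ + 1 := by exact_mod_cast (Nat.lt_floor_add_one x).le
    calc (x : ℝ≥0∞) * ∑' n : ℕ+, (if (x : ℝ≥0∞) < n then (n : ℝ≥0∞)⁻¹ ^ 2 else 0)
        ≤ (⌊x⌋₊ + 1) * (2 / (⌊x⌋₊ + 1)) := by gcongr
      _ ≤ 2 := ENNReal.mul_div_le

/-- The weight `(σ(n) / n) ^ a / n ^ 2`, whose sum over `n` is the `a`-th moment controlling the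
iterated sums over least common multiples. -/
noncomputable def abundancyWeight (a n : ℕ) : ℝ≥0∞ := abundancyIndex n ^ a * (n : ℝ≥0∞)⁻¹ ^ 2

lemma abundancyWeight_mul_le (a m n : ℕ) :
    abundancyWeight a (m * n) ≤ abundancyWeight a m * abundancyWeight a n := by
  calc abundancyWeight a (m * n)
      ≤ (abundancyIndex m * abundancyIndex n) ^ a * ((m * n : ℕ) : ℝ≥0∞)⁻¹ ^ 2 := by
        unfold abundancyWeight
        gcongr
        exact abundancyIndex_mul_le m n
    _ = abundancyWeight a m * abundancyWeight a n := by
        unfold abundancyWeight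
        rw [ennreal_inv_natCast_mul]
        ring

lemma hasInvTail_abundancyWeight (a : ℕ) : HasInvTail (abundancyWeight a) := by
  induction a with
  | zero =>
    have hzero : abundancyWeight 0 = fun n : ℕ => (n : ℝ≥0∞)⁻¹ ^ 2 := by
      funext n
      rw [abundancyWeight, pow_zero, one_mul]
    exact hzero ▸ hasInvTail_inv_sq
  | succ a ih =>
    have hsucc : abundancyWeight (a + 1) = fun n => abundancyWeight a n * abundancyIndex n := by
      funext n
      rw [abundancyWeight, abundancyWeight, pow_succ]
      ring
    exact hsucc ▸ ih.mul_abundancyIndex (abundancyWeight_mul_le a)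

lemma ennreal_inv_natCast_lcm {m n : ℕ} (hm : m ≠ 0) :
    (m.lcm n : ℝ≥0∞)⁻¹ = m.gcd n * ((m : ℝ≥0∞)⁻¹ * (n : ℝ≥0∞)⁻¹) := by
  rw [← ennreal_inv_natCast_mul, ← Nat.gcd_mul_lcm, ennreal_inv_natCast_mul, ← mul_assoc,
    ennreal_natCast_mul_inv_cancel (Nat.gcd_ne_zero_left hm), one_mul]

lemma abundancyIndex_lcm_term_le (a : ℕ) {m n : ℕ} (hm : m ≠ 0) (hn : n ≠ 0) :
    abundancyIndex (m.lcm n) ^ a * (m.lcm n : ℝ≥0∞)⁻¹ * (n : ℝ≥0∞)⁻¹ ≤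
      abundancyIndex m ^ a * (m : ℝ≥0∞)⁻¹ * (m.gcd n * abundancyWeight a n) := by
  calc abundancyIndex (m.lcm n) ^ a * (m.lcm n : ℝ≥0∞)⁻¹ * (n : ℝ≥0∞)⁻¹
      ≤ (abundancyIndex m * abundancyIndex n) ^ a * (m.lcm n : ℝ≥0∞)⁻¹ * (n : ℝ≥0∞)⁻¹ := by
        gcongr
        exact abundancyIndex_lcm_le hm hn
    _ = abundancyIndex m ^ a * (m : ℝ≥0∞)⁻¹ * (m.gcd n * abundancyWeight a n) := by
        rw [ennreal_inv_natCast_lcm hm, abundancyWeight]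
        ring

lemma natCast_mul_abundancyWeight_le (a : ℕ) {d m : ℕ} (hm : m ≠ 0) (hd : d ∣ m) :
    d * abundancyWeight a d ≤ abundancyIndex m ^ a * (d : ℝ≥0∞)⁻¹ := by
  calc d * abundancyWeight a d
      = (d * (d : ℝ≥0∞)⁻¹) * (abundancyIndex d ^ a * (d : ℝ≥0∞)⁻¹) := by
        rw [abundancyWeight]
        ring
    _ = abundancyIndex d ^ a * (d : ℝ≥0∞)⁻¹ := by
        rw [ennreal_natCast_mul_inv_cancel (ne_zero_of_dvd_ne_zero hm hd), one_mul]
    _ ≤ abundancyIndex m ^ a * (d : ℝ≥0∞)⁻¹ := by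
        gcongr
        exact abundancyIndex_le_of_dvd hm hd

lemma tsum_gcd_mul_abundancyWeight_le (a : ℕ) {m : ℕ} (hm : m ≠ 0) :
    ∑' n : ℕ+, (m.gcd n : ℝ≥0∞) * abundancyWeight a n ≤
      abundancyIndex m ^ (a + 1) * ∑' k : ℕ+, abundancyWeight a k := by
  calc ∑' n : ℕ+, (m.gcd n : ℝ≥0∞) * abundancyWeight a n
      ≤ ∑ d ∈ m.divisors, (d : ℝ≥0∞) * ∑' k : ℕ+, abundancyWeight a (d * k) :=
        tsum_pnat_gcd_mul_le hm _
    _ ≤ ∑ d ∈ m.divisors, (d : ℝ≥0∞) * ∑' k : ℕ+, abundancyWeight a d * abundancyWeight a k := by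
        gcongr with d _ k
        exact abundancyWeight_mul_le a d k
    _ = ∑ d ∈ m.divisors, d * abundancyWeight a d * ∑' k : ℕ+, abundancyWeight a k := by
        simp only [ENNReal.tsum_mul_left, mul_assoc]
    _ ≤ ∑ d ∈ m.divisors,
          abundancyIndex m ^ a * (d : ℝ≥0∞)⁻¹ * ∑' k : ℕ+, abundancyWeight a k := by
        gcongr ∑ d ∈ _, ?_ * _ with d hd
        exact natCast_mul_abundancyWeight_le a hm (Nat.dvd_of_mem_divisors hd)
    _ = abundancyIndex m ^ (a + 1) * ∑' k : ℕ+, abundancyWeight a k := by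
        rw [← Finset.sum_mul, ← Finset.mul_sum, ← abundancyIndex, pow_succ]

lemma tsum_abundancyIndex_lcm_le (a : ℕ) {m : ℕ} (hm : m ≠ 0) :
    ∑' n : ℕ+, abundancyIndex (m.lcm n) ^ a * (m.lcm n : ℝ≥0∞)⁻¹ * (n : ℝ≥0∞)⁻¹ ≤
      (∑' k : ℕ+, abundancyWeight a k) * (abundancyIndex m ^ (2 * a + 1) * (m : ℝ≥0∞)⁻¹) := by
  calc ∑' n : ℕ+, abundancyIndex (m.lcm n) ^ a * (m.lcm n : ℝ≥0∞)⁻¹ * (n : ℝ≥0∞)⁻¹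
      ≤ ∑' n : ℕ+, abundancyIndex m ^ a * (m : ℝ≥0∞)⁻¹ * (m.gcd n * abundancyWeight a n) :=
        ENNReal.tsum_le_tsum fun n => abundancyIndex_lcm_term_le a hm n.ne_zero
    _ ≤ abundancyIndex m ^ a * (m : ℝ≥0∞)⁻¹ *
          (abundancyIndex m ^ (a + 1) * ∑' k : ℕ+, abundancyWeight a k) := by
        rw [ENNReal.tsum_mul_left]
        gcongr
        exact tsum_gcd_mul_abundancyWeight_le a hm
    _ = (∑' k : ℕ+, abundancyWeight a k) * (abundancyIndex m ^ (2 * a + 1) * (m : ℝ≥0∞)⁻¹) := by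
        ring

/-- The least common multiple `[n_1, …, n_s]` of a multi-index, equal to `1` when `s = 0`. -/
def tupleLcm {s : ℕ} (N : Fin s → ℕ+) : ℕ := Finset.univ.lcm fun i => (N i : ℕ)

section MultiIndex

variable {s : ℕ}

lemma tupleLcm_ne_zero (N : Fin s → ℕ+) : tupleLcm N ≠ 0 :=
  Finset.lcm_ne_zero_iff.mpr fun i _ => (N i).ne_zero

lemma tupleLcm_insertNth (i : Fin (s + 1)) (n : ℕ+) (N : Fin s → ℕ+) :
    tupleLcm (i.insertNth n N : Fin (s + 1) → ℕ+) = (n : ℕ).lcm (tupleLcm N) := by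
  classical
  rw [tupleLcm, Fin.univ_succAbove s i, Finset.cons_eq_insert, Finset.lcm_insert,
    Finset.map_eq_image, Finset.lcm_image, Fin.insertNth_apply_same]
  simp only [Function.comp_def, Fin.coe_succAboveEmb, Fin.insertNth_apply_succAbove]
  rfl

lemma prod_inv_insertNth (i : Fin (s + 1)) (n : ℕ+) (N : Fin s → ℕ+) :
    ∏ j, ((i.insertNth n N : Fin (s + 1) → ℕ+) j : ℝ≥0∞)⁻¹ =
      (n : ℝ≥0∞)⁻¹ * ∏ j, (N j : ℝ≥0∞)⁻¹ := by
  simp only [Fin.prod_univ_succAbove _ i, Fin.insertNth_apply_same, Fin.insertNth_apply_succAbove]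

lemma tsum_eq_tsum_tsum_insertNth {α : Type*} (i : Fin (s + 1))
    (F : (Fin (s + 1) → α) → ℝ≥0∞) :
    ∑' N, F N = ∑' n, ∑' N : Fin s → α, F (i.insertNth n N) := by
  rw [← (Fin.insertNthEquiv (fun _ => α) i).tsum_eq, ENNReal.tsum_prod']
  rfl

end MultiIndex

lemma exists_tsum_abundancyIndex_lcm_tupleLcm_le (s a : ℕ) :
    ∃ K ≠ ∞, ∃ b : ℕ, ∀ m : ℕ, m ≠ 0 →
      ∑' N : Fin s → ℕ+, abundancyIndex (m.lcm (tupleLcm N)) ^ a *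
        (m.lcm (tupleLcm N) : ℝ≥0∞)⁻¹ * ∏ i, (N i : ℝ≥0∞)⁻¹ ≤
      K * (abundancyIndex m ^ b * (m : ℝ≥0∞)⁻¹) := by
  induction s with
  | zero => exact ⟨1, ENNReal.one_ne_top, a, fun m _ => by simp [tupleLcm, tsum_fintype]⟩
  | succ s ih =>
    obtain ⟨K, hK, b, hKb⟩ := ih
    refine ⟨K * ∑' k : ℕ+, abundancyWeight b k,
      ENNReal.mul_ne_top hK (hasInvTail_abundancyWeight b).tsum_ne_top, 2 * b + 1,
      fun m hm => ?_⟩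
    rw [tsum_eq_tsum_tsum_insertNth 0]
    simp only [tupleLcm_insertNth, prod_inv_insertNth, ← Nat.lcm_assoc]
    calc ∑' (n : ℕ+) (N : Fin s → ℕ+), abundancyIndex ((m.lcm n).lcm (tupleLcm N)) ^ a *
          ((m.lcm n).lcm (tupleLcm N) : ℝ≥0∞)⁻¹ * ((n : ℝ≥0∞)⁻¹ * ∏ i, (N i : ℝ≥0∞)⁻¹)
        = ∑' n : ℕ+, (∑' N : Fin s → ℕ+, abundancyIndex ((m.lcm n).lcm (tupleLcm N)) ^ a *
          ((m.lcm n).lcm (tupleLcm N) : ℝ≥0∞)⁻¹ * ∏ i, (N i : ℝ≥0∞)⁻¹) * (n : ℝ≥0∞)⁻¹ := by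
          simp only [← ENNReal.tsum_mul_right]
          exact tsum_congr fun n => tsum_congr fun N => by ring
      _ ≤ ∑' n : ℕ+, K * (abundancyIndex (m.lcm n) ^ b * (m.lcm n : ℝ≥0∞)⁻¹) *
          (n : ℝ≥0∞)⁻¹ := by
          gcongr with n
          exact hKb _ (Nat.lcm_ne_zero hm n.ne_zero)
      _ = K * ∑' n : ℕ+, abundancyIndex (m.lcm n) ^ b * (m.lcm n : ℝ≥0∞)⁻¹ * (n : ℝ≥0∞)⁻¹ := by
          simp only [← ENNReal.tsum_mul_left, mul_assoc]
      _ ≤ K * ((∑' k : ℕ+, abundancyWeight b k) *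
          (abundancyIndex m ^ (2 * b + 1) * (m : ℝ≥0∞)⁻¹)) := by
          gcongr
          exact tsum_abundancyIndex_lcm_le b hm
      _ = _ := (mul_assoc _ _ _).symm

lemma eulerTerm_nonneg {r : ℕ} (N : Fin r → ℕ+) : 0 ≤ eulerTerm r N := by
  unfold eulerTerm
  positivity

lemma ofReal_eulerTerm {r : ℕ} (N : Fin r → ℕ+) :
    ENNReal.ofReal (eulerTerm r N) =
      ((tupleLcm N).totient : ℝ≥0∞)⁻¹ * ∏ i, (N i : ℝ≥0∞)⁻¹ := by
  have hφ : (0 : ℝ) < (tupleLcm N).totient := by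
    exact_mod_cast Nat.totient_pos.mpr (Nat.pos_of_ne_zero (tupleLcm_ne_zero N))
  have hN (i : Fin r) : (0 : ℝ) < (N i : ℕ) := by exact_mod_cast (N i).pos
  change ENNReal.ofReal (1 / ((tupleLcm N).totient * ∏ i, ((N i : ℕ) : ℝ))) = _
  rw [one_div, mul_inv, ← Finset.prod_inv_distrib, ENNReal.ofReal_mul (by positivity),
    ENNReal.ofReal_prod_of_nonneg fun i _ => by positivity, ENNReal.ofReal_inv_of_pos hφ,
    ENNReal.ofReal_natCast]
  simp only [ENNReal.ofReal_inv_of_pos (hN _), ENNReal.ofReal_natCast]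

lemma ofReal_eulerTerm_insertNth_le {s : ℕ} (i : Fin (s + 1)) (n : ℕ+) (N : Fin s → ℕ+) :
    ENNReal.ofReal (eulerTerm (s + 1) (i.insertNth n N)) ≤
      (n : ℝ≥0∞)⁻¹ * (abundancyIndex ((n : ℕ).lcm (tupleLcm N)) ^ 2 *
        ((n : ℕ).lcm (tupleLcm N) : ℝ≥0∞)⁻¹ * ∏ j, (N j : ℝ≥0∞)⁻¹) := by
  rw [ofReal_eulerTerm, tupleLcm_insertNth, prod_inv_insertNth, mul_left_comm]
  gcongr
  exact inv_totient_le_abundancyIndex_sq_mul_inv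
    (Nat.lcm_ne_zero n.ne_zero (tupleLcm_ne_zero N))

lemma exists_tsum_ofReal_eulerTerm_insertNth_le (s : ℕ) :
    ∃ K ≠ ∞, ∃ b : ℕ, ∀ (i : Fin (s + 1)) (n : ℕ+),
      ∑' N : Fin s → ℕ+, ENNReal.ofReal (eulerTerm (s + 1) (i.insertNth n N)) ≤
        K * abundancyWeight b n := by
  obtain ⟨K, hK, b, hKb⟩ := exists_tsum_abundancyIndex_lcm_tupleLcm_le s 2
  refine ⟨K, hK, b, fun i n => ?_⟩
  refine (ENNReal.tsum_le_tsum (ofReal_eulerTerm_insertNth_le i n)).trans ?_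
  rw [ENNReal.tsum_mul_left]
  calc _ ≤ (n : ℝ≥0∞)⁻¹ * (K * (abundancyIndex n ^ b * (n : ℝ≥0∞)⁻¹)) := by
        gcongr
        exact hKb n n.ne_zero
    _ = K * abundancyWeight b n := by
        rw [abundancyWeight]
        ring

lemma exists_ofReal_mul_tsum_ofReal_eulerTerm_le (s : ℕ) :
    ∃ C ≠ ∞, ∀ (i : Fin (s + 1)) (x : ℝ),
      ENNReal.ofReal x * ∑' N : {N : Fin (s + 1) → ℕ+ // x < ((N i : ℕ) : ℝ)},
        ENNReal.ofReal (eulerTerm (s + 1) N.1) ≤ C := by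
  obtain ⟨K, hK, b, hKb⟩ := exists_tsum_ofReal_eulerTerm_insertNth_le s
  obtain ⟨C, hC, htail⟩ := hasInvTail_abundancyWeight b
  refine ⟨K * C, ENNReal.mul_ne_top hK hC, fun i x => ?_⟩
  rw [tsum_subtype_eq_tsum_ite (fun N : Fin (s + 1) → ℕ+ => x < ((N i : ℕ) : ℝ))
    fun N => ENNReal.ofReal (eulerTerm (s + 1) N), tsum_eq_tsum_tsum_insertNth i]
  simp only [Fin.insertNth_apply_same, ← ENNReal.ofReal_lt_natCast (PNat.ne_zero _)]
  set y := ENNReal.ofReal x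
  calc y * ∑' (n : ℕ+) (N : Fin s → ℕ+),
        (if y < n then ENNReal.ofReal (eulerTerm (s + 1) (i.insertNth n N)) else 0)
      ≤ y * ∑' n : ℕ+, K * (if y < n then abundancyWeight b n else 0) := by
        gcongr with n
        split_ifs
        · exact hKb i n
        · simp
    _ = K * (y * ∑' n : ℕ+, if y < n then abundancyWeight b n else 0) := by
        rw [ENNReal.tsum_mul_left, mul_left_comm]
    _ ≤ K * C := by gcongr; exact htail y

theorem dyadic_sum_totient_lcm_bigO_general (r : ℕ) (i : Fin r) :
    ∃ C : ℝ, 0 < C ∧ ∀ x : ℝ, 0 < x →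
      Summable (fun N : {N : Fin r → ℕ+ // x < ((N i : ℕ) : ℝ)} => eulerTerm r N.1) ∧
      ∑' N : {N : Fin r → ℕ+ // x < ((N i : ℕ) : ℝ)}, eulerTerm r N.1 ≤ C / x := by
  obtain ⟨s, rfl⟩ : ∃ s, r = s + 1 := Nat.exists_eq_add_of_le' i.pos
  obtain ⟨C, hC, htail⟩ := exists_ofReal_mul_tsum_ofReal_eulerTerm_le s
  refine ⟨C.toReal + 1, by positivity, fun x hx => ?_⟩
  have hx0 : ENNReal.ofReal x ≠ 0 := (ENNReal.ofReal_pos.mpr hx).ne'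
  have htsum : ∑' N : {N : Fin (s + 1) → ℕ+ // x < ((N i : ℕ) : ℝ)},
      ENNReal.ofReal (eulerTerm (s + 1) N.1) ≤ C / ENNReal.ofReal x := by
    rw [ENNReal.le_div_iff_mul_le (.inl hx0) (.inl ENNReal.ofReal_ne_top), mul_comm]
    exact htail i x
  obtain ⟨hsum, hle⟩ := summable_and_tsum_le_of_tsum_ofReal_le
    (f := fun N : {N : Fin (s + 1) → ℕ+ // x < ((N i : ℕ) : ℝ)} => eulerTerm (s + 1) N.1)
    (fun N => eulerTerm_nonneg N.1) (ENNReal.div_ne_top hC hx0) htsum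
  refine ⟨hsum, hle.trans ?_⟩
  rw [ENNReal.toReal_div, ENNReal.toReal_ofReal hx.le]
  gcongr
  exact le_add_of_nonneg_right zero_le_one

/-- Fix `r ≥ 1`. There is a constant `C > 0` such that for every real
`x ≥ 1`, the family `1/(φ([n_1,…,n_r])·n_1⋯n_r)` over multi-indices with
`x < n_1 ≤ 2x` is summable with sum at most `C/x`. -/
theorem dyadic_sum_totient_lcm_bigO (r : ℕ) (hr : 1 ≤ r) :
    ∃ C : ℝ, 0 < C ∧ ∀ x : ℝ, 1 ≤ x →
      Summable (fun N : {N : Fin r → ℕ+ //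
          x < ((N ⟨0, hr⟩ : ℕ) : ℝ) ∧ ((N ⟨0, hr⟩ : ℕ) : ℝ) ≤ 2 * x} => eulerTerm r N.1) ∧
      ∑' N : {N : Fin r → ℕ+ //
          x < ((N ⟨0, hr⟩ : ℕ) : ℝ) ∧ ((N ⟨0, hr⟩ : ℕ) : ℝ) ≤ 2 * x}, eulerTerm r N.1 ≤
        C / x := by
  obtain ⟨C, hC, h⟩ := dyadic_sum_totient_lcm_bigO_general r ⟨0, hr⟩
  exact ⟨C, hC, fun x hx => summable_and_tsum_le_of_imp eulerTerm_nonneg (fun _ hN => hN.1)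
    (h x (one_pos.trans_le hx))⟩
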